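/- Let V be a nonempty finite type, let w be a conductance function on V whose support graph G_w is connected, and let L be its weighted Laplacian. Let u, v ∈ V be adjacent in G_w (i.e. u ≠ v and w u v > 0), and let f : V → ℝ satisfy L f = δ_u − δ_v. Then 0 < w u v * (f u − f v) ≤ 1, and w u v * (f u − f v) = 1 if and only if the edge {u, v} is a bridge of G_w (i.e. it lies in no cycle of G_w, equivalently deleting it disconnects u from v). Equivalently, the canonical measure μ(e) = 1 − w u v · r(u, v) of the edge e = {u, v} satisfies 0 ≤ μ(e) < 1, with μ(e) = 0 if and only if e is a bridge. -/

import Mathlib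

open Finset

/-!
Let `f` be a potential driving a current `a > 0` from `u` to `v`, and let `c` be the conductance of
the edge `{u, v}`. By Green's formula the energy of `f` is `a * (f u - f v)`; it is positive, since
a potential of zero energy is constant along edges and drives no current. So `f v < f u`.

Deleting the edge turns `f` into a potential driving the current `a' = a - c * (f u - f v)` from `u`
to `v` in the remaining network. Its energy `a' * (f u - f v)` is nonnegative, so `0 ≤ a'`. If
`a' = 0`, then `f` is constant on the components of the remaining network, which therefore
separates `u` from `v` because `f u ≠ f v`. Conversely, no current flows between different
components, as testing Green's formula with the indicator of the component of `u` shows, so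
`a' = 0` if the edge is a bridge.
-/

section Ring

variable {V R : Type*} [Fintype V] [CommRing R]

/-- The weighted Laplacian of a network with conductances `w`, as an operator on potentials:
`weightedLaplacian w f x` is the net current flowing out of `x`. -/
def weightedLaplacian (w : V → V → R) (f : V → R) : V → R :=
  fun x ↦ ∑ y, w x y * (f x - f y)

/-- The Dirichlet form of a network with conductances `w`. The sum runs over ordered pairs, so that
every edge is counted twice and `dirichletForm w f f` is twice the energy of `f`. -/
def dirichletForm (w : V → V → R) (f g : V → R) : R :=
  ∑ x, ∑ y, w x y * ((f x - f y) * (g x - g y))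

/-- The potential `f` drives a current of strength `a` into the network at `u` and out at `v`, with
Kirchhoff's current law at all other vertices. -/
def DrivesCurrent [DecidableEq V] (w : V → V → R) (f : V → R) (a : R) (u v : V) : Prop :=
  weightedLaplacian w f = a • (Pi.single u 1 - Pi.single v 1)

lemma dirichletForm_eq_two_mul_sum_weightedLaplacian_mul {w : V → V → R}
    (hsymm : ∀ x y, w x y = w y x) (f g : V → R) :
    dirichletForm w f g = 2 * ∑ x, weightedLaplacian w f x * g x := by
  have outflow : ∑ x, ∑ y, w x y * (f x - f y) * g x = ∑ x, weightedLaplacian w f x * g x := by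
    simp only [weightedLaplacian, sum_mul]
  have inflow : ∑ x, ∑ y, w x y * (f x - f y) * g y = -∑ x, weightedLaplacian w f x * g x := by
    rw [sum_comm, ← outflow]
    simp only [← sum_neg_distrib]
    refine sum_congr rfl fun x _ ↦ sum_congr rfl fun y _ ↦ ?_
    rw [hsymm y x]
    ring
  calc
    dirichletForm w f g
      = ∑ x, ∑ y, w x y * (f x - f y) * g x - ∑ x, ∑ y, w x y * (f x - f y) * g y := by
        simp only [dirichletForm, ← sum_sub_distrib, ← mul_sub, mul_assoc]
    _ = 2 * ∑ x, weightedLaplacian w f x * g x := by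
        rw [outflow, inflow]
        ring

lemma DrivesCurrent.dirichletForm_eq [DecidableEq V] {w : V → V → R} {f : V → R} {a : R} {u v : V}
    (hf : DrivesCurrent w f a u v) (hsymm : ∀ x y, w x y = w y x) (g : V → R) :
    dirichletForm w f g = 2 * (a * (g u - g v)) := by
  rw [dirichletForm_eq_two_mul_sum_weightedLaplacian_mul hsymm, hf]
  simp [Pi.single_apply, mul_assoc, ← mul_sum, sub_mul]

lemma dirichletForm_eq_zero_of_forall_ne_zero {w : V → V → R} (f : V → R) {g : V → R}
    (hg : ∀ x y, w x y ≠ 0 → g x = g y) : dirichletForm w f g = 0 := by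
  refine sum_eq_zero fun x _ ↦ sum_eq_zero fun y _ ↦ ?_
  by_cases hw : w x y = 0
  · simp [hw]
  · simp [hg x y hw]

lemma weightedLaplacian_eq_zero_of_forall_ne_zero {w : V → V → R} {f : V → R}
    (hf : ∀ x y, w x y ≠ 0 → f x = f y) : weightedLaplacian w f = 0 := by
  refine funext fun x ↦ sum_eq_zero fun y _ ↦ ?_
  by_cases hw : w x y = 0
  · simp [hw]
  · simp [hf x y hw]

end Ring

section DeleteEdge

variable {V R : Type*} [DecidableEq V]

/-- The conductances `w` with that of the edge `e` set to zero. -/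
def deleteEdge [Zero R] (w : V → V → R) (e : Sym2 V) : V → V → R :=
  fun x y ↦ if s(x, y) = e then 0 else w x y

lemma deleteEdge_symm [Zero R] {w : V → V → R} (hsymm : ∀ x y, w x y = w y x) (e : Sym2 V)
    (x y : V) : deleteEdge w e x y = deleteEdge w e y x := by
  simp only [deleteEdge, Sym2.eq_swap (a := y), hsymm y]

lemma deleteEdge_nonneg [Zero R] [Preorder R] {w : V → V → R} (hnonneg : ∀ x y, 0 ≤ w x y)
    (e : Sym2 V) (x y : V) : 0 ≤ deleteEdge w e x y := by
  unfold deleteEdge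
  split_ifs
  exacts [le_rfl, hnonneg x y]

variable [Fintype V] [CommRing R]

lemma weightedLaplacian_deleteEdge_left (w : V → V → R) (f : V → R) (u v : V) :
    weightedLaplacian (deleteEdge w s(u, v)) f u =
      weightedLaplacian w f u - w u v * (f u - f v) := by
  have hterm (y : V) : deleteEdge w s(u, v) u y * (f u - f y) =
      w u y * (f u - f y) - if y = v then w u y * (f u - f y) else 0 := by
    simp only [deleteEdge, Sym2.congr_right]
    split_ifs <;> ring
  simp [weightedLaplacian, hterm]

lemma weightedLaplacian_deleteEdge_of_notMem (w : V → V → R) (f : V → R) {e : Sym2 V} {x : V}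
    (hx : x ∉ e) : weightedLaplacian (deleteEdge w e) f x = weightedLaplacian w f x := by
  refine sum_congr rfl fun y _ ↦ ?_
  have hne : s(x, y) ≠ e := fun h ↦ hx (h ▸ Sym2.mem_mk_left x y)
  rw [deleteEdge, if_neg hne]

lemma DrivesCurrent.deleteEdge {w : V → V → R} {f : V → R} {a : R} {u v : V}
    (hf : DrivesCurrent w f a u v) (hsymm : ∀ x y, w x y = w y x) (huv : u ≠ v) :
    DrivesCurrent (deleteEdge w s(u, v)) f (a - w u v * (f u - f v)) u v := by
  unfold DrivesCurrent at hf ⊢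
  ext x
  by_cases hx : x ∈ s(u, v)
  · obtain rfl | rfl := Sym2.mem_iff.1 hx
    · rw [weightedLaplacian_deleteEdge_left, hf]
      simp [huv]
    · rw [Sym2.eq_swap, weightedLaplacian_deleteEdge_left, hf, hsymm]
      simp [huv.symm, sub_eq_add_neg, mul_add, add_comm]
  · rw [weightedLaplacian_deleteEdge_of_notMem w f hx, hf]
    obtain ⟨hxu, hxv⟩ : x ≠ u ∧ x ≠ v := by simpa using hx
    simp [hxu, hxv]

end DeleteEdge

section SupportGraph

variable {V R : Type*} [Zero R]

/-- `G` is the support graph of the conductances `w`: its edges are the pairs of distinct vertices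
joined by a positive conductance. -/
def IsSupportGraph [LT R] (G : SimpleGraph V) (w : V → V → R) : Prop :=
  ∀ x y, G.Adj x y ↔ x ≠ y ∧ 0 < w x y

lemma IsSupportGraph.deleteEdges [Preorder R] [DecidableEq V] {G : SimpleGraph V} {w : V → V → R}
    (hG : IsSupportGraph G w) (e : Sym2 V) :
    IsSupportGraph (G.deleteEdges {e}) (deleteEdge w e) := by
  intro x y
  rw [SimpleGraph.deleteEdges_adj, hG, Set.mem_singleton_iff, deleteEdge]
  split_ifs with he <;> simp [he]

lemma IsSupportGraph.forall_ne_zero_iff_forall_reachable [PartialOrder R] {α : Type*}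
    {G : SimpleGraph V} {w : V → V → R} (hG : IsSupportGraph G w) (hnonneg : ∀ x y, 0 ≤ w x y)
    {f : V → α} :
    (∀ x y, w x y ≠ 0 → f x = f y) ↔ ∀ x y, G.Reachable x y → f x = f y := by
  refine ⟨fun h x y hxy ↦ ?_, fun h x y hw ↦ ?_⟩
  · obtain ⟨p⟩ := hxy
    induction p with
    | nil => rfl
    | cons hadj _ ih => exact (h _ _ ((hG _ _).1 hadj).2.ne').trans ih
  · obtain rfl | hxy := eq_or_ne x y
    · rfl
    · exact h x y ((hG x y).2 ⟨hxy, (hnonneg x y).lt_of_ne' hw⟩).reachable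

end SupportGraph

section Ordered

variable {V R : Type*} [Fintype V] [CommRing R] [LinearOrder R] [IsStrictOrderedRing R]
  {w : V → V → R} {f : V → R}

lemma dirichletForm_self_nonneg (hnonneg : ∀ x y, 0 ≤ w x y) (f : V → R) :
    0 ≤ dirichletForm w f f :=
  sum_nonneg fun x _ ↦ sum_nonneg fun y _ ↦ mul_nonneg (hnonneg x y) (mul_self_nonneg _)

lemma dirichletForm_self_eq_zero_iff (hnonneg : ∀ x y, 0 ≤ w x y) :
    dirichletForm w f f = 0 ↔ ∀ x y, w x y ≠ 0 → f x = f y := by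
  refine ⟨fun h x y hw ↦ ?_, dirichletForm_eq_zero_of_forall_ne_zero f⟩
  have hterm (x y : V) : 0 ≤ w x y * ((f x - f y) * (f x - f y)) :=
    mul_nonneg (hnonneg x y) (mul_self_nonneg _)
  have hrow := (sum_eq_zero_iff_of_nonneg fun x _ ↦ sum_nonneg fun y _ ↦ hterm x y).1 h
  have hxy := (sum_eq_zero_iff_of_nonneg fun y _ ↦ hterm x y).1 (hrow x (mem_univ x)) y (mem_univ y)
  simpa [hw, sub_eq_zero] using hxy

namespace DrivesCurrent

variable [DecidableEq V] {a : R} {u v : V}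

lemma strength_mul_sub_nonneg (hf : DrivesCurrent w f a u v) (hsymm : ∀ x y, w x y = w y x)
    (hnonneg : ∀ x y, 0 ≤ w x y) : 0 ≤ a * (f u - f v) := by
  have h := dirichletForm_self_nonneg hnonneg f
  rw [hf.dirichletForm_eq hsymm] at h
  exact nonneg_of_mul_nonneg_right h two_pos

lemma apply_ne (hf : DrivesCurrent w f a u v) (hsymm : ∀ x y, w x y = w y x)
    (hnonneg : ∀ x y, 0 ≤ w x y) (huv : u ≠ v) (ha : a ≠ 0) : f u ≠ f v := by
  intro h
  have henergy : dirichletForm w f f = 0 := by simp [hf.dirichletForm_eq hsymm, h]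
  have hzero := weightedLaplacian_eq_zero_of_forall_ne_zero
    ((dirichletForm_self_eq_zero_iff hnonneg).1 henergy)
  have hu := congrFun (hf.symm.trans hzero) u
  simp [huv, ha] at hu

lemma apply_lt (hf : DrivesCurrent w f a u v) (hsymm : ∀ x y, w x y = w y x)
    (hnonneg : ∀ x y, 0 ≤ w x y) (huv : u ≠ v) (ha : 0 < a) : f v < f u := by
  have hle : f v ≤ f u :=
    sub_nonneg.1 (nonneg_of_mul_nonneg_right (hf.strength_mul_sub_nonneg hsymm hnonneg) ha)
  exact hle.lt_of_ne' (hf.apply_ne hsymm hnonneg huv ha.ne')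

lemma conductance_mul_sub_le (hf : DrivesCurrent w f a u v) (hsymm : ∀ x y, w x y = w y x)
    (hnonneg : ∀ x y, 0 ≤ w x y) (huv : u ≠ v) (ha : 0 < a) : w u v * (f u - f v) ≤ a :=
  sub_nonneg.1 <| nonneg_of_mul_nonneg_left
    ((hf.deleteEdge hsymm huv).strength_mul_sub_nonneg (deleteEdge_symm hsymm _)
      (deleteEdge_nonneg hnonneg _))
    (sub_pos.2 (hf.apply_lt hsymm hnonneg huv ha))

variable {G : SimpleGraph V}

lemma eq_zero_of_not_reachable (hf : DrivesCurrent w f a u v) (hsymm : ∀ x y, w x y = w y x)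
    (hnonneg : ∀ x y, 0 ≤ w x y) (hG : IsSupportGraph G w) (huv : ¬G.Reachable u v) : a = 0 := by
  classical
  let g : V → R := fun x ↦ if G.Reachable u x then 1 else 0
  have hg : ∀ x y, G.Reachable x y → g x = g y := fun x y hxy ↦
    if_congr ⟨fun h ↦ h.trans hxy, fun h ↦ h.trans hxy.symm⟩ rfl rfl
  have hform := dirichletForm_eq_zero_of_forall_ne_zero f
    ((hG.forall_ne_zero_iff_forall_reachable hnonneg).2 hg)
  rw [hf.dirichletForm_eq hsymm] at hform
  simpa [g, huv] using hform

lemma apply_eq_of_reachable (hf : DrivesCurrent w f 0 u v) (hsymm : ∀ x y, w x y = w y x)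
    (hnonneg : ∀ x y, 0 ≤ w x y) (hG : IsSupportGraph G w) {x y : V} (hxy : G.Reachable x y) :
    f x = f y := by
  have henergy : dirichletForm w f f = 0 := by simp [hf.dirichletForm_eq hsymm]
  exact (hG.forall_ne_zero_iff_forall_reachable hnonneg).1
    ((dirichletForm_self_eq_zero_iff hnonneg).1 henergy) x y hxy

lemma eq_zero_iff_not_reachable (hf : DrivesCurrent w f a u v) (hsymm : ∀ x y, w x y = w y x)
    (hnonneg : ∀ x y, 0 ≤ w x y) (hG : IsSupportGraph G w) (hne : f u ≠ f v) :
    a = 0 ↔ ¬G.Reachable u v := by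
  refine ⟨?_, hf.eq_zero_of_not_reachable hsymm hnonneg hG⟩
  rintro rfl huv
  exact hne (hf.apply_eq_of_reachable hsymm hnonneg hG huv)

lemma conductance_mul_sub_eq_iff_isBridge (hf : DrivesCurrent w f a u v)
    (hsymm : ∀ x y, w x y = w y x) (hnonneg : ∀ x y, 0 ≤ w x y) (hG : IsSupportGraph G w)
    (huv : u ≠ v) (ha : a ≠ 0) : w u v * (f u - f v) = a ↔ G.IsBridge s(u, v) := by
  rw [SimpleGraph.isBridge_iff, eq_comm, ← sub_eq_zero]
  exact (hf.deleteEdge hsymm huv).eq_zero_iff_not_reachable (deleteEdge_symm hsymm _)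
    (deleteEdge_nonneg hnonneg _) (hG.deleteEdges _) (hf.apply_ne hsymm hnonneg huv ha)

end DrivesCurrent

theorem stmt_9_general [DecidableEq V] {a : R} {u v : V} {G : SimpleGraph V}
    (hsymm : ∀ x y, w x y = w y x) (hnonneg : ∀ x y, 0 ≤ w x y) (hG : IsSupportGraph G w)
    (hadj : G.Adj u v) (ha : 0 < a) (hf : DrivesCurrent w f a u v) :
    0 < w u v * (f u - f v) ∧ w u v * (f u - f v) ≤ a ∧
      (w u v * (f u - f v) = a ↔ G.IsBridge s(u, v)) := by
  obtain ⟨huv, hwuv⟩ := (hG u v).1 hadj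
  exact ⟨mul_pos hwuv (sub_pos.2 (hf.apply_lt hsymm hnonneg huv ha)),
    hf.conductance_mul_sub_le hsymm hnonneg huv ha,
    hf.conductance_mul_sub_eq_iff_isBridge hsymm hnonneg hG huv ha.ne'⟩

end Ordered

/-- For an edge `{u,v}` of a connected network, the current `w u v * (f u − f v)` through
the edge under unit current from `u` to `v` lies in `(0, 1]`, and equals `1` precisely
when the edge is a bridge.  Equivalently the canonical measure
`μ(e) = 1 − w u v · r(u,v)` satisfies `0 ≤ μ(e) < 1`, with `μ(e) = 0` iff `e` is a bridge. -/
theorem stmt_9 {V : Type*} [Fintype V] [Nonempty V] [DecidableEq V]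
    (w : V → V → ℝ)
    (hsymm : ∀ x y, w x y = w y x)
    (hnonneg : ∀ x y, 0 ≤ w x y)
    (hdiag : ∀ x, w x x = 0)
    (L : (V → ℝ) → (V → ℝ))
    (hL : ∀ f x, L f x = ∑ y', w x y' * (f x - f y'))
    (G : SimpleGraph V)
    (hG : ∀ x y, G.Adj x y ↔ x ≠ y ∧ 0 < w x y)
    (hconn : G.Connected)
    (u v : V) (huv : u ≠ v) (hwuv : 0 < w u v)
    (f : V → ℝ)
    (hf : L f = (fun t => (if t = u then (1 : ℝ) else 0) - (if t = v then (1 : ℝ) else 0))) :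
    0 < w u v * (f u - f v) ∧ w u v * (f u - f v) ≤ 1 ∧
      (w u v * (f u - f v) = 1 ↔ G.IsBridge s(u, v)) := by
  have hcurrent : DrivesCurrent w f 1 u v := by
    ext x
    simpa [weightedLaplacian, hL, Pi.single_apply] using congrFun hf x
  exact stmt_9_general hsymm hnonneg hG ((hG u v).2 ⟨huv, hwuv⟩) one_pos hcurrent
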